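/- Let A be a real m×m matrix, B ∈ ℝ^m, C a real 1×m matrix, D ∈ ℝ, a ∈ ℝ, ω > 0, and t_k = kπ/ω. Assume A² + ω²I is invertible and let x_bls(t) = −(A² + ω²I)⁻¹ (sin(ωt)·A + ω cos(ωt)·I) B a, the periodic solution of ẋ = Ax + Ba sin(ωt). Let w be the square wave with mean w̄ and amplitude ŵ (values in ℝ^m), let x_q : ℝ → ℝ^m be continuous, 2π/ω-periodic and satisfy x_q′(t) = A(x_q(t) + w(t)) for t ∉ {t_k}, and set q = x_q + w. Define the output y(t) = C (x_bls(t) + q(t)) + D a sin(ωt). Then, for every integer k ≥ 1 such that ikω is not an eigenvalue of A, the k-th complex Fourier coefficient c_k(y) = (ω/(2π)) ∫₀^{2π/ω} y(t) e^{−ikωt} dt is: c_1(y) = (C (iωI − A)⁻¹ B + D)·(a/(2i)) + (2ω/π) C (iωI − A)⁻¹ ŵ for k = 1; c_k(y) = 0 for even k ≥ 2; and c_k(y) = (2ω/π) C (ikωI − A)⁻¹ ŵ for odd k ≥ 3. (Thus the first-order describing function of a reset system equals its base-linear frequency response plus the first harmonic of the nonlinearity, while all higher-order describing functions coincide with the corresponding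 harmonics of the nonlinearity.) -/

import Mathlib

open Real Matrix Set

/-!
Write `c_k` for the `k`-th Fourier coefficient over the period `2π/ω`. Integration by parts, which
tolerates countably many corners, gives `c_k(x') = ikω c_k(x)` for every continuous periodic `x`.
Hence `x' = A (x + w) + u` turns into `(ikω - A) c_k(x + w) = ikω c_k(w) + c_k(u)`: the input `w`
only enters through `ikω c_k(w)`, which for a square wave is `(ω/π) (1 - (-1)^k) ŵ`. By
superposition `x = x_bls + x_q` satisfies such an equation with `u = sin(ωt) a B`, which has only
the harmonics `k = ±1`.
-/

section HarmonicCoeff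

variable {E F : Type*} [NormedAddCommGroup E] [NormedSpace ℂ E]
  [NormedAddCommGroup F] [NormedSpace ℂ F] {ω : ℝ} {f g : ℝ → E}

/-- The `k`-th complex Fourier coefficient of a `2π/ω`-periodic function, indexed by the angular
frequency `ω` rather than by an interval as in `fourierCoeffOn`. -/
noncomputable def harmonicCoeff (ω : ℝ) (f : ℝ → E) (k : ℤ) : E :=
  ((ω / (2 * π) : ℝ) : ℂ) • ∫ t in (0 : ℝ)..(2 * π / ω), Complex.exp (-Complex.I * k * ω * t) • f t

lemma intervalIntegrable_cexp_smul {a b : ℝ}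
    (hf : IntervalIntegrable f MeasureTheory.volume a b) (c : ℂ) :
    IntervalIntegrable (fun t : ℝ ↦ Complex.exp (c * t) • f t) MeasureTheory.volume a b :=
  hf.continuousOn_smul (by fun_prop)

lemma harmonicCoeff_add (hf : IntervalIntegrable f MeasureTheory.volume 0 (2 * π / ω))
    (hg : IntervalIntegrable g MeasureTheory.volume 0 (2 * π / ω)) (k : ℤ) :
    harmonicCoeff ω (fun t ↦ f t + g t) k = harmonicCoeff ω f k + harmonicCoeff ω g k := by
  simp only [harmonicCoeff, smul_add]
  rw [intervalIntegral.integral_add (intervalIntegrable_cexp_smul hf _)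
    (intervalIntegrable_cexp_smul hg _), smul_add]

lemma harmonicCoeff_clm_comp [CompleteSpace E] [CompleteSpace F] (L : E →L[ℂ] F)
    (hf : IntervalIntegrable f MeasureTheory.volume 0 (2 * π / ω)) (k : ℤ) :
    harmonicCoeff ω (fun t ↦ L (f t)) k = L (harmonicCoeff ω f k) := by
  simp only [harmonicCoeff, ← map_smul]
  rw [L.intervalIntegral_comp_comm (intervalIntegrable_cexp_smul hf _), map_smul]

lemma harmonicCoeff_smul_const [CompleteSpace E] (φ : ℝ → ℂ) (v : E) (k : ℤ) :
    harmonicCoeff ω (fun t ↦ φ t • v) k = harmonicCoeff ω φ k • v := by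
  simp only [harmonicCoeff, ← smul_assoc, intervalIntegral.integral_smul_const]

lemma cexp_neg_I_mul_period (hω : ω ≠ 0) (k : ℤ) :
    Complex.exp (-Complex.I * k * ω * ((2 * π / ω : ℝ) : ℂ)) = 1 := by
  have hω' : (ω : ℂ) ≠ 0 := mod_cast hω
  refine Complex.exp_eq_one_iff.2 ⟨-k, ?_⟩
  push_cast
  field_simp

lemma cexp_neg_I_mul_half_period (hω : ω ≠ 0) (k : ℤ) :
    Complex.exp (-Complex.I * k * ω * ((π / ω : ℝ) : ℂ)) = (-1) ^ k := by
  have hω' : (ω : ℂ) ≠ 0 := mod_cast hω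
  have hexponent : -Complex.I * k * ω * ((π / ω : ℝ) : ℂ) = k * -(π * Complex.I) := by
    push_cast
    field_simp
  rw [hexponent, Complex.exp_int_mul, Complex.exp_neg, Complex.exp_pi_mul_I, inv_neg_one]

lemma hasDerivAt_cexp_const_mul (c : ℂ) (t : ℝ) :
    HasDerivAt (fun s : ℝ ↦ Complex.exp (c * s)) (c * Complex.exp (c * t)) t := by
  simpa [mul_comm] using ((hasDerivAt_id t).ofReal_comp.const_mul c).cexp

lemma harmonicCoeff_deriv [CompleteSpace E] {f' : ℝ → E} (hω : ω ≠ 0) {s : Set ℝ}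
    (hs : s.Countable) (hf : Continuous f) (hper : Function.Periodic f (2 * π / ω))
    (hderiv : ∀ t ∉ s, HasDerivAt f (f' t) t)
    (hf' : IntervalIntegrable f' MeasureTheory.volume 0 (2 * π / ω)) (k : ℤ) :
    harmonicCoeff ω f' k = (Complex.I * k * ω) • harmonicCoeff ω f k := by
  set κ : ℂ := -Complex.I * k * ω with hκ
  have hint : IntervalIntegrable (fun t : ℝ ↦ κ • Complex.exp (κ * t) • f t)
      MeasureTheory.volume 0 (2 * π / ω) := Continuous.intervalIntegrable (by fun_prop) _ _
  have hint' := intervalIntegrable_cexp_smul hf' κ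
  have hprod : ∀ t ∉ s, HasDerivAt (fun t : ℝ ↦ Complex.exp (κ * t) • f t)
      (Complex.exp (κ * t) • f' t + κ • Complex.exp (κ * t) • f t) t := fun t ht ↦ by
    simpa only [← smul_assoc] using! (hasDerivAt_cexp_const_mul κ t).smul (hderiv t ht)
  have hboundary := MeasureTheory.integral_eq_of_hasDerivAt_off_countable _ _ hs
    (Continuous.continuousOn (by fun_prop)) (fun t ht ↦ hprod t ht.2) (hint'.add hint)
  have hends : f (2 * π / ω) = f 0 := by simpa using hper 0
  rw [intervalIntegral.integral_add hint' hint, intervalIntegral.integral_smul, hends,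
    cexp_neg_I_mul_period hω, Complex.ofReal_zero, mul_zero, Complex.exp_zero, sub_self,
    add_eq_zero_iff_eq_neg, ← neg_smul] at hboundary
  rw [harmonicCoeff, hboundary, harmonicCoeff, smul_comm, hκ]
  simp only [neg_mul, neg_neg]

lemma harmonicCoeff_cexp (hω : ω ≠ 0) (n k : ℤ) :
    harmonicCoeff ω (fun t : ℝ ↦ Complex.exp (Complex.I * n * ω * t)) k =
      if k = n then 1 else 0 := by
  have hω' : (ω : ℂ) ≠ 0 := mod_cast hω
  split_ifs with h
  · subst h
    have hone : ∀ t : ℝ, Complex.exp (-Complex.I * k * ω * t) •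
        Complex.exp (Complex.I * k * ω * t) = 1 := fun t ↦ by
      rw [smul_eq_mul, ← Complex.exp_add, ← Complex.exp_zero]
      ring_nf
    have hπ : (π : ℂ) ≠ 0 := mod_cast Real.pi_ne_zero
    simp only [harmonicCoeff, hone, intervalIntegral.integral_const, sub_zero]
    rw [Complex.real_smul, smul_eq_mul]
    push_cast
    field_simp
  · have hper : Function.Periodic (fun t : ℝ ↦ Complex.exp (Complex.I * n * ω * t))
        (2 * π / ω) := fun t ↦ by
      have hperiod := cexp_neg_I_mul_period hω (-n)
      push_cast at hperiod ⊢
      rw [mul_add, Complex.exp_add, ← neg_mul_neg Complex.I, hperiod, mul_one]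
    have heigen := harmonicCoeff_deriv hω countable_empty (by fun_prop) hper
      (fun t _ ↦ hasDerivAt_cexp_const_mul _ t)
      (Continuous.intervalIntegrable (by fun_prop) _ _) k
    have hsmul : harmonicCoeff ω (fun t : ℝ ↦ Complex.I * n * ω *
        Complex.exp (Complex.I * n * ω * t)) k = Complex.I * n * ω *
        harmonicCoeff ω (fun t : ℝ ↦ Complex.exp (Complex.I * n * ω * t)) k := by
      simpa only [mul_comm, smul_eq_mul] using harmonicCoeff_smul_const
        (fun t : ℝ ↦ Complex.exp (Complex.I * n * ω * t)) (Complex.I * n * ω) k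
    have hkn : (k : ℂ) - n ≠ 0 := sub_ne_zero.2 (mod_cast h)
    have hfactor : Complex.I * ω * (k - n) ≠ 0 :=
      mul_ne_zero (mul_ne_zero Complex.I_ne_zero hω') hkn
    refine (mul_eq_zero.1 ?_).resolve_left hfactor
    rw [hsmul, smul_eq_mul] at heigen
    linear_combination -heigen

lemma harmonicCoeff_const_mul_sin (hω : ω ≠ 0) (a : ℝ) (k : ℤ) :
    harmonicCoeff ω (fun t ↦ ((a * Real.sin (ω * t) : ℝ) : ℂ)) k =
      ((if k = 1 then 1 else 0) - if k = -1 then 1 else 0) * (a / (2 * Complex.I)) := by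
  have heuler : ∀ t : ℝ, ((a * Real.sin (ω * t) : ℝ) : ℂ) =
      Complex.exp (Complex.I * (1 : ℤ) * ω * t) • (a / (2 * Complex.I)) +
        Complex.exp (Complex.I * (-1 : ℤ) * ω * t) • (-a / (2 * Complex.I)) := fun t ↦ by
    rw [Complex.ofReal_mul, Complex.ofReal_sin, Complex.sin, smul_eq_mul, smul_eq_mul]
    push_cast
    field_simp
    ring_nf
    rw [Complex.I_sq]
    ring
  simp only [heuler]
  rw [harmonicCoeff_add (Continuous.intervalIntegrable (by fun_prop) _ _)
      (Continuous.intervalIntegrable (by fun_prop) _ _),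
    harmonicCoeff_smul_const, harmonicCoeff_smul_const, harmonicCoeff_cexp hω,
    harmonicCoeff_cexp hω, smul_eq_mul, smul_eq_mul]
  ring

end HarmonicCoeff

section SquareWave

/-- The square wave with mean `wbar`, amplitude `what` and reset instants `kπ/ω`: it equals
`wbar + what` on `[kπ/ω, (k+1)π/ω)` for even `k` and `wbar - what` for odd `k`. -/
noncomputable def squareWave {V : Type*} [AddGroup V] (ω : ℝ) (wbar what : V) (t : ℝ) : V :=
  if Even ⌊t * ω / π⌋ then wbar + what else wbar - what

lemma map_squareWave {V W : Type*} [AddGroup V] [AddGroup W] (φ : V →+ W) (ω : ℝ)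
    (wbar what : V) (t : ℝ) :
    φ (squareWave ω wbar what t) = squareWave ω (φ wbar) (φ what) t := by
  simp only [squareWave, apply_ite φ, map_add, map_sub]

lemma squareWave_of_mem_Ioo {V : Type*} [AddGroup V] {ω : ℝ} (hω : 0 < ω) (wbar what : V) {j : ℤ}
    {t : ℝ} (ht : t ∈ Ioo (j * π / ω) ((j + 1) * π / ω)) :
    squareWave ω wbar what t = if Even j then wbar + what else wbar - what := by
  have hfloor : ⌊t * ω / π⌋ = j := by
    rw [Int.floor_eq_iff, le_div_iff₀ pi_pos, div_lt_iff₀ pi_pos]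
    exact ⟨((div_lt_iff₀ hω).1 ht.1).le, (lt_div_iff₀ hω).1 ht.2⟩
  rw [squareWave, hfloor]

variable {E : Type*} [NormedAddCommGroup E] {ω : ℝ}

lemma eqOn_squareWave_first_half (hω : 0 < ω) (wbar what : E) :
    EqOn (fun _ ↦ wbar + what) (squareWave ω wbar what) (uIoo 0 (π / ω)) := fun t ht ↦ by
  rw [uIoo_of_le (by positivity)] at ht
  rw [squareWave_of_mem_Ioo hω wbar what (j := 0) (by simpa using ht), if_pos Even.zero]

lemma eqOn_squareWave_second_half (hω : 0 < ω) (wbar what : E) :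
    EqOn (fun _ ↦ wbar - what) (squareWave ω wbar what) (uIoo (π / ω) (2 * π / ω)) := fun t ht ↦ by
  rw [uIoo_of_le (by gcongr; linarith [pi_pos])] at ht
  rw [squareWave_of_mem_Ioo hω wbar what (j := 1) (by norm_num; exact ht), if_neg (by decide)]

lemma intervalIntegrable_squareWave (hω : 0 < ω) (wbar what : E) :
    IntervalIntegrable (squareWave ω wbar what) MeasureTheory.volume 0 (2 * π / ω) :=
  (intervalIntegrable_const.congr_uIoo (eqOn_squareWave_first_half hω wbar what)).trans
    (intervalIntegrable_const.congr_uIoo (eqOn_squareWave_second_half hω wbar what))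

lemma smul_integral_cexp_smul_const [NormedSpace ℂ E] [CompleteSpace E] (c : ℂ) (v : E) (a b : ℝ) :
    c • ∫ t in a..b, Complex.exp (c * t) • v = (Complex.exp (c * b) - Complex.exp (c * a)) • v := by
  rw [intervalIntegral.integral_smul_const, ← smul_assoc, ← intervalIntegral.integral_smul]
  congr 1
  exact intervalIntegral.integral_eq_sub_of_hasDerivAt
    (fun t _ ↦ hasDerivAt_cexp_const_mul c t) (Continuous.intervalIntegrable (by fun_prop) _ _)

lemma harmonicCoeff_squareWave [NormedSpace ℂ E] [CompleteSpace E] (hω : 0 < ω)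
    (wbar what : E) (k : ℤ) :
    (Complex.I * k * ω) • harmonicCoeff ω (squareWave ω wbar what) k =
      (ω / π * (1 - (-1) ^ k) : ℂ) • what := by
  have hfirst := eqOn_squareWave_first_half hω wbar what
  have hsecond := eqOn_squareWave_second_half hω wbar what
  have hint : ∀ {v : E} {a b : ℝ}, EqOn (fun _ ↦ v) (squareWave ω wbar what) (uIoo a b) →
      IntervalIntegrable (fun t : ℝ ↦ Complex.exp (-Complex.I * k * ω * t) •
        squareWave ω wbar what t) MeasureTheory.volume a b := fun h ↦
    intervalIntegrable_cexp_smul (intervalIntegrable_const.congr_uIoo h) _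
  have hpiece : ∀ {v : E} {a b : ℝ}, EqOn (fun _ ↦ v) (squareWave ω wbar what) (uIoo a b) →
      (-Complex.I * k * ω) • ∫ t in a..b, Complex.exp (-Complex.I * k * ω * t) •
        squareWave ω wbar what t = (Complex.exp (-Complex.I * k * ω * b) -
          Complex.exp (-Complex.I * k * ω * a)) • v := fun h ↦ by
    rw [← smul_integral_cexp_smul_const]
    congr 1
    exact (intervalIntegral.integral_congr_uIoo fun t ht ↦ by simp only [← h ht]).symm
  have htotal : (-Complex.I * k * ω) • ∫ t in (0 : ℝ)..(2 * π / ω),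
      Complex.exp (-Complex.I * k * ω * t) • squareWave ω wbar what t =
        (-2 * (1 - (-1) ^ k) : ℂ) • what := by
    rw [← intervalIntegral.integral_add_adjacent_intervals (hint hfirst) (hint hsecond), smul_add,
      hpiece hfirst, hpiece hsecond, cexp_neg_I_mul_period hω.ne',
      cexp_neg_I_mul_half_period hω.ne', Complex.ofReal_zero, mul_zero, Complex.exp_zero]
    module
  calc
    _ = (-(ω / (2 * π) : ℝ) : ℂ) • (-Complex.I * k * ω) • ∫ t in (0 : ℝ)..(2 * π / ω),
        Complex.exp (-Complex.I * k * ω * t) • squareWave ω wbar what t := by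
      rw [harmonicCoeff]
      module
    _ = _ := by
      rw [htotal, smul_smul]
      congr 1
      push_cast
      field

end SquareWave

section BaseLinearResponse

lemma hasDerivAt_sin_cos_response {V : Type*} [NormedAddCommGroup V] [NormedSpace ℝ V]
    (L : V →ₗ[ℝ] V) (ω : ℝ) {r b : V} (hr : L (L r) + ω ^ 2 • r = b) (t : ℝ) :
    HasDerivAt (fun t ↦ -(Real.sin (ω * t) • L r + (ω * Real.cos (ω * t)) • r))
      (L (-(Real.sin (ω * t) • L r + (ω * Real.cos (ω * t)) • r)) + Real.sin (ω * t) • b) t := by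
  have hphase : HasDerivAt (fun t ↦ ω * t) ω t := by simpa using (hasDerivAt_id t).const_mul ω
  refine ((hphase.sin.smul_const (L r)).add
    ((hphase.cos.const_mul ω).smul_const r)).neg.congr_deriv ?_
  simp only [← hr, map_neg, map_add, map_smul]
  module

variable {n : Type*} [Fintype n] [DecidableEq n]

/-- The periodic solution `x_bls` of `ẋ = Ax + sin(ωt) b`, meaningful when `A² + ω²I` is
invertible. -/
noncomputable def baseLinearResponse (A : Matrix n n ℝ) (ω : ℝ) (b : n → ℝ) (t : ℝ) : n → ℝ :=
  -(((A ^ 2 + ω ^ 2 • (1 : Matrix n n ℝ))⁻¹ *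
    (Real.sin (ω * t) • A + (ω * Real.cos (ω * t)) • (1 : Matrix n n ℝ))) *ᵥ b)

lemma periodic_baseLinearResponse (A : Matrix n n ℝ) {ω : ℝ} (hω : ω ≠ 0) (b : n → ℝ) :
    Function.Periodic (baseLinearResponse A ω b) (2 * π / ω) := fun t ↦ by
  simp only [baseLinearResponse, mul_add, mul_div_cancel₀ _ hω, Real.sin_add_two_pi,
    Real.cos_add_two_pi]

lemma hasDerivAt_baseLinearResponse {A : Matrix n n ℝ} {ω : ℝ}
    (hA : IsUnit (A ^ 2 + ω ^ 2 • (1 : Matrix n n ℝ))) (b : n → ℝ) (t : ℝ) :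
    HasDerivAt (baseLinearResponse A ω b)
      (A *ᵥ baseLinearResponse A ω b t + Real.sin (ω * t) • b) t := by
  set M := A ^ 2 + ω ^ 2 • (1 : Matrix n n ℝ) with hM
  have hcomm : Commute A M⁻¹ := by
    have : Commute A M := (Commute.self_pow A 2).add_right ((Commute.one_right A).smul_right _)
    simpa using Matrix.Commute.zpow_right this (-1)
  have hresponse : baseLinearResponse A ω b = fun t ↦
      -(Real.sin (ω * t) • A.mulVecLin (M⁻¹ *ᵥ b) + (ω * Real.cos (ω * t)) • M⁻¹ *ᵥ b) := by
    funext t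
    simp only [baseLinearResponse, ← hM, mulVecLin_apply, mulVec_mulVec, hcomm.eq, mul_add,
      Matrix.mul_smul, mul_one, add_mulVec, smul_mulVec]
  have hsolves : A.mulVecLin (A.mulVecLin (M⁻¹ *ᵥ b)) + ω ^ 2 • M⁻¹ *ᵥ b = b := by
    have hinv : M * M⁻¹ = 1 := mul_nonsing_inv M ((isUnit_iff_isUnit_det M).1 hA)
    calc
      _ = (M * M⁻¹) *ᵥ b := by
        simp only [hM, mulVecLin_apply, mulVec_mulVec, add_mul, smul_mul, one_mul, add_mulVec,
          smul_mulVec, pow_two, mul_assoc]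
      _ = b := by rw [hinv, one_mulVec]
  rw [hresponse]
  exact hasDerivAt_sin_cos_response A.mulVecLin ω hsolves t

end BaseLinearResponse

section LinearSystem

lemma smul_harmonicCoeff_sub_map {E : Type*} [NormedAddCommGroup E] [NormedSpace ℂ E]
    [CompleteSpace E] (L : E →L[ℂ] E) {ω : ℝ} (hω : ω ≠ 0) {s : Set ℝ} (hs : s.Countable)
    {x w u : ℝ → E} (hx : Continuous x) (hper : Function.Periodic x (2 * π / ω))
    (hderiv : ∀ t ∉ s, HasDerivAt x (L (x t + w t) + u t) t)
    (hw : IntervalIntegrable w MeasureTheory.volume 0 (2 * π / ω))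
    (hu : IntervalIntegrable u MeasureTheory.volume 0 (2 * π / ω)) (k : ℤ) :
    (Complex.I * k * ω) • harmonicCoeff ω (fun t ↦ x t + w t) k -
        L (harmonicCoeff ω (fun t ↦ x t + w t) k) =
      (Complex.I * k * ω) • harmonicCoeff ω w k + harmonicCoeff ω u k := by
  have hxint := hx.intervalIntegrable (μ := MeasureTheory.volume) 0 (2 * π / ω)
  have hLint : IntervalIntegrable (fun t ↦ L (x t + w t)) MeasureTheory.volume 0 (2 * π / ω) :=
    ⟨L.integrable_comp (hxint.add hw).1, L.integrable_comp (hxint.add hw).2⟩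
  have hfreq : L (harmonicCoeff ω (fun t ↦ x t + w t) k) + harmonicCoeff ω u k =
      (Complex.I * k * ω) • harmonicCoeff ω x k := by
    rw [← harmonicCoeff_clm_comp L (hxint.add hw), ← harmonicCoeff_add hLint hu]
    exact harmonicCoeff_deriv hω hs hx hper hderiv (hLint.add hu) k
  rw [sub_eq_iff_eq_add, add_assoc, add_comm (harmonicCoeff ω u k), hfreq,
    harmonicCoeff_add hxint hw, smul_add, add_comm]

variable {n p : Type*} [Fintype n] [Fintype p] {ω : ℝ}

lemma eq_inv_mulVec_of_notMem_spectrum [DecidableEq n] {A : Matrix n n ℂ} {z : ℂ}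
    (hz : z ∉ spectrum ℂ A) {v b : n → ℂ} (h : z • v - A *ᵥ v = b) :
    v = (z • (1 : Matrix n n ℂ) - A)⁻¹ *ᵥ b := by
  have hunit : IsUnit (z • (1 : Matrix n n ℂ) - A).det := by
    rw [← isUnit_iff_isUnit_det, ← Algebra.algebraMap_eq_smul_one]
    exact spectrum.notMem_iff.1 hz
  have hmul : (z • (1 : Matrix n n ℂ) - A) *ᵥ v = b := by
    rw [sub_mulVec, smul_mulVec, one_mulVec, h]
  rw [← hmul, mulVec_mulVec, nonsing_inv_mul _ hunit, one_mulVec]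

lemma harmonicCoeff_squareWave_response [DecidableEq n] {A : Matrix n n ℂ} {b wbar what : n → ℂ}
    (hω : 0 < ω) {s : Set ℝ} (hs : s.Countable) {x : ℝ → n → ℂ} (hx : Continuous x)
    (hper : Function.Periodic x (2 * π / ω)) {u : ℝ → ℂ}
    (hu : IntervalIntegrable u MeasureTheory.volume 0 (2 * π / ω))
    (hderiv : ∀ t ∉ s, HasDerivAt x (A *ᵥ (x t + squareWave ω wbar what t) + u t • b) t)
    {k : ℤ} (hk : Complex.I * k * ω ∉ spectrum ℂ A) :
    harmonicCoeff ω (fun t ↦ x t + squareWave ω wbar what t) k =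
      ((Complex.I * k * ω) • (1 : Matrix n n ℂ) - A)⁻¹ *ᵥ
        ((ω / π * (1 - (-1) ^ k) : ℂ) • what + harmonicCoeff ω u k • b) := by
  refine eq_inv_mulVec_of_notMem_spectrum hk ?_
  rw [← harmonicCoeff_squareWave hω wbar, ← harmonicCoeff_smul_const]
  exact smul_harmonicCoeff_sub_map A.mulVecLin.toContinuousLinearMap hω.ne' hs hx hper hderiv
    (intervalIntegrable_squareWave hω wbar what) (hu.smul_continuousOn continuousOn_const) k

lemma harmonicCoeff_mulVec_add_smul (C : Matrix p n ℂ) (d : p → ℂ) {f : ℝ → n → ℂ}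
    (hf : IntervalIntegrable f MeasureTheory.volume 0 (2 * π / ω)) {u : ℝ → ℂ}
    (hu : IntervalIntegrable u MeasureTheory.volume 0 (2 * π / ω)) (k : ℤ) :
    harmonicCoeff ω (fun t ↦ C *ᵥ f t + u t • d) k =
      C *ᵥ harmonicCoeff ω f k + harmonicCoeff ω u k • d := by
  have hCf : IntervalIntegrable (fun t ↦ C *ᵥ f t) MeasureTheory.volume 0 (2 * π / ω) :=
    ⟨C.mulVecLin.toContinuousLinearMap.integrable_comp hf.1,
      C.mulVecLin.toContinuousLinearMap.integrable_comp hf.2⟩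
  rw [harmonicCoeff_add hCf (hu.smul_continuousOn continuousOn_const), harmonicCoeff_smul_const]
  congr 1
  exact harmonicCoeff_clm_comp C.mulVecLin.toContinuousLinearMap hf k

end LinearSystem

section Complexification

variable {n p : Type*}

lemma ofReal_mulVec [Fintype n] (A : Matrix p n ℝ) (v : n → ℝ) :
    (fun i ↦ ((A *ᵥ v) i : ℂ)) = A.map Complex.ofReal *ᵥ fun i ↦ (v i : ℂ) :=
  funext (RingHom.map_mulVec Complex.ofRealHom A v)

lemma ofReal_squareWave (ω : ℝ) (wbar what : n → ℝ) (t : ℝ) :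
    (fun i ↦ (squareWave ω wbar what t i : ℂ)) =
      squareWave ω (fun i ↦ (wbar i : ℂ)) (fun i ↦ (what i : ℂ)) t :=
  map_squareWave (Complex.ofRealHom.toAddMonoidHom.compLeft n) ω wbar what t

lemma ofReal_mulVec_add_squareWave [Fintype n] (A : Matrix p n ℝ) (ω : ℝ) (v wbar what : n → ℝ)
    (σ t : ℝ) (d : p → ℝ) :
    (fun i ↦ ((A *ᵥ (v + squareWave ω wbar what t) + σ • d) i : ℂ)) =
      A.map Complex.ofReal *ᵥ ((fun i ↦ (v i : ℂ)) +
        squareWave ω (fun i ↦ (wbar i : ℂ)) (fun i ↦ (what i : ℂ)) t) +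
          (σ : ℂ) • fun i ↦ (d i : ℂ) := by
  have hinput : (fun i ↦ (v i : ℂ)) + (fun i ↦ (squareWave ω wbar what t i : ℂ)) =
      fun i ↦ ((v + squareWave ω wbar what t) i : ℂ) := by
    funext i
    simp only [Pi.add_apply, Complex.ofReal_add]
  rw [← ofReal_squareWave, hinput, ← ofReal_mulVec]
  funext i
  simp only [Pi.add_apply, Pi.smul_apply, smul_eq_mul, Complex.ofReal_add, Complex.ofReal_mul]

lemma hasDerivAt_ofReal_comp_pi {x : ℝ → n → ℝ} {x' : n → ℝ} {t : ℝ} (h : HasDerivAt x x' t) :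
    HasDerivAt (fun t i ↦ (x t i : ℂ)) (fun i ↦ (x' i : ℂ)) t :=
  hasDerivAt_pi.2 fun i ↦ (hasDerivAt_pi.1 h i).ofReal_comp

end Complexification

lemma harmonicCoeff_reset_output {n p : Type*} [Fintype n] [DecidableEq n] [Fintype p]
    {A : Matrix n n ℝ} {b : n → ℝ} {C : Matrix p n ℝ} {d : p → ℝ} {ω : ℝ} (hω : 0 < ω)
    {wbar what : n → ℝ} {s : Set ℝ} (hs : s.Countable) {x : ℝ → n → ℝ} (hx : Continuous x)
    (hper : Function.Periodic x (2 * π / ω)) {u : ℝ → ℝ} (hu : Continuous u)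
    (hderiv : ∀ t ∉ s, HasDerivAt x (A *ᵥ (x t + squareWave ω wbar what t) + u t • b) t)
    {y : ℝ → p → ℝ} (hy : ∀ t, y t = C *ᵥ (x t + squareWave ω wbar what t) + u t • d)
    {k : ℤ} (hk : Complex.I * k * ω ∉ spectrum ℂ (A.map Complex.ofReal)) :
    harmonicCoeff ω (fun t i ↦ (y t i : ℂ)) k =
      (ω / π * (1 - (-1) ^ k) : ℂ) • C.map Complex.ofReal *ᵥ
          ((Complex.I * k * ω) • (1 : Matrix n n ℂ) - A.map Complex.ofReal)⁻¹ *ᵥ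
            (fun i ↦ (what i : ℂ)) +
        harmonicCoeff ω (fun t ↦ (u t : ℂ)) k • (C.map Complex.ofReal *ᵥ
          ((Complex.I * k * ω) • (1 : Matrix n n ℂ) - A.map Complex.ofReal)⁻¹ *ᵥ
            (fun i ↦ (b i : ℂ)) + fun i ↦ (d i : ℂ)) := by
  have hx' : Continuous fun t i ↦ (x t i : ℂ) := by fun_prop
  have hu' : IntervalIntegrable (fun t ↦ (u t : ℂ)) MeasureTheory.volume 0 (2 * π / ω) :=
    Continuous.intervalIntegrable (by fun_prop) _ _
  have hstate := harmonicCoeff_squareWave_response hω hs hx' (fun t ↦ by simp only [hper t]) hu'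
    (fun t ht ↦ by
      rw [← ofReal_mulVec_add_squareWave]
      exact hasDerivAt_ofReal_comp_pi (hderiv t ht)) hk
  have houtput := harmonicCoeff_mulVec_add_smul (C.map Complex.ofReal) (fun i ↦ (d i : ℂ))
    ((hx'.intervalIntegrable _ _).add (intervalIntegrable_squareWave hω
      (fun i ↦ (wbar i : ℂ)) fun i ↦ (what i : ℂ))) hu' k
  simp only [← ofReal_mulVec_add_squareWave, ← hy] at houtput
  rw [houtput, hstate]
  simp only [mulVec_add, mulVec_smul, smul_add, add_assoc]

theorem reset_system_output_harmonics_general {n p : Type*} [Fintype n] [DecidableEq n]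
    [Fintype p] (A : Matrix n n ℝ) (B : n → ℝ) (C : Matrix p n ℝ) (D : p → ℝ) (a : ℝ) {ω : ℝ}
    (hω : 0 < ω) {x_bls : ℝ → n → ℝ} (hper_bls : Function.Periodic x_bls (2 * π / ω))
    (hderiv_bls : ∀ t, HasDerivAt x_bls (A *ᵥ x_bls t + Real.sin (ω * t) • a • B) t)
    {wbar what : n → ℝ} {w : ℝ → n → ℝ} (hw : ∀ t, w t = squareWave ω wbar what t)
    {x_q : ℝ → n → ℝ} (hcont : Continuous x_q) (hper : Function.Periodic x_q (2 * π / ω))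
    (hderiv : ∀ t : ℝ, (∀ k : ℤ, t ≠ k * π / ω) → HasDerivAt x_q (A *ᵥ (x_q t + w t)) t)
    {q : ℝ → n → ℝ} (hq : ∀ t, q t = x_q t + w t) {y : ℝ → p → ℝ}
    (hy : ∀ t, y t = C *ᵥ (x_bls t + q t) + fun i ↦ D i * a * Real.sin (ω * t)) {k : ℤ}
    (hk : Complex.I * k * ω ∉ spectrum ℂ (A.map Complex.ofReal)) :
    (k = 1 → harmonicCoeff ω (fun t i ↦ (y t i : ℂ)) 1 =
      ((a : ℂ) / (2 * Complex.I)) • (C.map Complex.ofReal *ᵥ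
        ((Complex.I * ω) • (1 : Matrix n n ℂ) - A.map Complex.ofReal)⁻¹ *ᵥ (fun i ↦ (B i : ℂ)) +
          fun i ↦ (D i : ℂ)) +
      ((2 * ω / π : ℝ) : ℂ) • C.map Complex.ofReal *ᵥ
        ((Complex.I * ω) • (1 : Matrix n n ℂ) - A.map Complex.ofReal)⁻¹ *ᵥ
          fun i ↦ (what i : ℂ)) ∧
    (Even k → harmonicCoeff ω (fun t i ↦ (y t i : ℂ)) k = 0) ∧
    (Odd k → k ≠ 1 → k ≠ -1 → harmonicCoeff ω (fun t i ↦ (y t i : ℂ)) k =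
      ((2 * ω / π : ℝ) : ℂ) • C.map Complex.ofReal *ᵥ
        ((Complex.I * k * ω) • (1 : Matrix n n ℂ) - A.map Complex.ofReal)⁻¹ *ᵥ
          fun i ↦ (what i : ℂ)) := by
  obtain rfl : w = squareWave ω wbar what := funext hw
  have hcont_bls : Continuous x_bls :=
    continuous_iff_continuousAt.2 fun t ↦ (hderiv_bls t).continuousAt
  have hstate : ∀ t ∉ range fun j : ℤ ↦ (j : ℝ) * π / ω, HasDerivAt (x_bls + x_q)
      (A *ᵥ ((x_bls + x_q) t + squareWave ω wbar what t) + (a * Real.sin (ω * t)) • B) t := by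
    intro t ht
    refine ((hderiv_bls t).add (hderiv t fun j hj ↦ ht ⟨j, hj.symm⟩)).congr_deriv ?_
    simp only [Pi.add_apply, mulVec_add]
    module
  have houtput : ∀ t, y t = C *ᵥ ((x_bls + x_q) t + squareWave ω wbar what t) +
      (a * Real.sin (ω * t)) • D := fun t ↦ by
    ext i
    simp only [hy, hq, add_assoc, Pi.add_apply, Pi.smul_apply, smul_eq_mul]
    ring
  have hcoeff := harmonicCoeff_reset_output hω (countable_range _) (hcont_bls.add hcont)
    (hper_bls.add hper) (by fun_prop) hstate houtput hk
  rw [harmonicCoeff_const_mul_sin hω.ne'] at hcoeff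
  refine ⟨?_, fun he ↦ ?_, fun ho hk1 hk1' ↦ ?_⟩
  · rintro rfl
    have hne : (1 : ℤ) ≠ -1 := by decide
    simp only [hcoeff, Int.cast_one, mul_one, zpow_one, if_true, hne, if_false, sub_zero, one_mul]
    push_cast
    module
  · have hk1 : k ≠ 1 := by grind
    have hk1' : k ≠ -1 := by grind
    simp [hcoeff, he.neg_one_zpow, hk1, hk1']
  · simp only [hcoeff, ho.neg_one_zpow, hk1, hk1', if_false, sub_self, zero_mul, zero_smul,
      add_zero]
    congr 1
    push_cast
    ring

/-- **HOSIDF of a reset system = base-linear frequency response plus harmonics of the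
nonlinearity.**
Let `x_bls` be the periodic response of `ẋ = Ax + B a sin(ωt)`, let `q = x_q + w` be
the nonlinear component driven by the square wave `w` with mean `w̄` and amplitude
`ŵ`, and let `y = C (x_bls + q) + D a sin(ωt)` be the output.  Then for every `k ≥ 1`
such that `ikω` is not an eigenvalue of `A`, the `k`-th Fourier coefficient of `y` is:
`(C (iωI - A)⁻¹ B + D) (a/(2i)) + (2ω/π) C (iωI - A)⁻¹ ŵ` for `k = 1`, zero for even
`k ≥ 2`, and `(2ω/π) C (ikωI - A)⁻¹ ŵ` for odd `k ≥ 3`. -/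
theorem reset_system_output_harmonics (m : ℕ)
    (A : Matrix (Fin m) (Fin m) ℝ) (B : Fin m → ℝ)
    (C : Matrix (Fin 1) (Fin m) ℝ) (D : ℝ) (a : ℝ) (ω : ℝ) (hω : 0 < ω)
    (hAinv : IsUnit (A ^ 2 + (ω ^ 2) • (1 : Matrix (Fin m) (Fin m) ℝ)))
    (x_bls : ℝ → Fin m → ℝ)
    (hx_bls : ∀ t, x_bls t = -(((A ^ 2 + (ω ^ 2) • (1 : Matrix (Fin m) (Fin m) ℝ))⁻¹ *
        (Real.sin (ω * t) • A +
          (ω * Real.cos (ω * t)) • (1 : Matrix (Fin m) (Fin m) ℝ))).mulVec (a • B)))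
    (wbar what : Fin m → ℝ) (w : ℝ → Fin m → ℝ)
    (hw : ∀ t : ℝ, w t = if Even ⌊t * ω / Real.pi⌋ then wbar + what else wbar - what)
    (x_q : ℝ → Fin m → ℝ)
    (hcont : Continuous x_q)
    (hper : Function.Periodic x_q (2 * Real.pi / ω))
    (hderiv : ∀ t : ℝ, (∀ k : ℤ, t ≠ (k : ℝ) * Real.pi / ω) →
      HasDerivAt x_q (A.mulVec (x_q t + w t)) t)
    (q : ℝ → Fin m → ℝ) (hq : ∀ t, q t = x_q t + w t)
    (y : ℝ → Fin 1 → ℝ)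
    (hy : ∀ t, y t = C.mulVec (x_bls t + q t) +
      fun _ : Fin 1 => D * a * Real.sin (ω * t))
    (c : ℤ → Fin 1 → ℂ)
    (hc : ∀ k : ℤ, c k = ((ω / (2 * Real.pi) : ℝ) : ℂ) •
      ∫ t in (0 : ℝ)..(2 * Real.pi / ω),
        Complex.exp (-Complex.I * k * ω * t) • (fun i => ((y t i : ℝ) : ℂ))) :
    ∀ k : ℤ, 1 ≤ k →
      (Complex.I * k * ω) ∉ spectrum ℂ (A.map Complex.ofReal) →
      ((k = 1 → c 1 = ((a : ℂ) / (2 * Complex.I)) •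
          ((C.map Complex.ofReal).mulVec
            ((((Complex.I * ω) • (1 : Matrix (Fin m) (Fin m) ℂ) -
              A.map Complex.ofReal)⁻¹).mulVec (fun i => ((B i : ℝ) : ℂ))) +
            fun _ : Fin 1 => (D : ℂ)) +
          ((2 * ω / Real.pi : ℝ) : ℂ) •
          ((C.map Complex.ofReal).mulVec
            ((((Complex.I * ω) • (1 : Matrix (Fin m) (Fin m) ℂ) -
              A.map Complex.ofReal)⁻¹).mulVec (fun i => ((what i : ℝ) : ℂ))))) ∧
      (Even k → c k = 0) ∧
      (3 ≤ k → Odd k → c k = ((2 * ω / Real.pi : ℝ) : ℂ) •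
          ((C.map Complex.ofReal).mulVec
            ((((Complex.I * k * ω) • (1 : Matrix (Fin m) (Fin m) ℂ) -
              A.map Complex.ofReal)⁻¹).mulVec (fun i => ((what i : ℝ) : ℂ)))))) := by
  intro k _ hspec
  obtain rfl : c = harmonicCoeff ω fun t i ↦ (y t i : ℂ) := funext hc
  obtain rfl : x_bls = baseLinearResponse A ω (a • B) := funext hx_bls
  exact (reset_system_output_harmonics_general A B C (fun _ ↦ D) a hω
    (periodic_baseLinearResponse A hω.ne' _) (hasDerivAt_baseLinearResponse hAinv _) hw
    hcont hper hderiv hq hy hspec).imp_right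
      (And.imp_right fun hodd h3 ho ↦ hodd ho (by lia) (by lia))
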